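/- There exists C > 0 such that for each sign σ ∈ {+1,−1} and all nonnegative square-summable sequences f, g, h : ℤ → [0,∞): Σ_{n₁, n₂ ∈ ℤ} ( |n₁−n₂| / ( ⟨Φ_σ⟩^{1/2} ⟨n₁⟩^{1/2} ⟨n₂⟩^{1/2} ) ) f_{n₁−n₂} g_{n₁} h_{n₂} ≤ C ‖f‖_{ℓ²} ‖g‖_{ℓ²} ‖h‖_{ℓ²}. -/

import Mathlib

open scoped ENNReal NNReal

/-- `⟨x⟩ = (1+x²)^{1/2}`. -/
noncomputable def jbR (x : ℝ) : ℝ := Real.sqrt (1 + x ^ 2)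

/-- The Zakharov phase `Φ_σ = n₁² - n₂² + σ⟨n₀⟩` with `n₀ = n₁ - n₂`. -/
noncomputable def PhiZak (σ : ℝ) (n₁ n₂ : ℤ) : ℝ :=
  ((n₁ ^ 2 - n₂ ^ 2 : ℤ) : ℝ) + σ * jbR ((n₁ - n₂ : ℤ) : ℝ)

/-- The `ℓ²(ℤ)` norm (valued in `[0,∞]`). -/
noncomputable def l2Z (ω : ℤ → ℝ≥0) : ℝ≥0∞ :=
  (∑' n : ℤ, ((ω n : ℝ≥0∞)) ^ 2) ^ (1/2 : ℝ)

/-!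
Factoring `n₁² - n₂² = (n₁ - n₂)(n₁ + n₂)` shows that the phase has size `|n₁ - n₂| |n₁ + n₂|`,
up to an error `O(|n₁ - n₂|)`. If `|n₁ + n₂|` is large, the error is absorbed and
`|n₁ - n₂|² ≲ ⟨Φ⟩ (⟨n₁⟩ + ⟨n₂⟩) / ⟨n₁ + n₂⟩`. If `|n₁ + n₂| ≲ 1`, the phase gives nothing, but `n₁`
and `n₂` are nearly opposite, so that `|n₁ - n₂|² ≲ ⟨n₁⟩ ⟨n₂⟩`. In both cases the weight is
`≲ ⟨n₁⟩⁻¹ + ⟨n₂⟩⁻¹ + ⟨n₁ + n₂⟩⁻¹`. Since `⟨·⟩⁻¹` is in `ℓ²`, each of the three terms is handled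
by pairing the four `ℓ²` factors so that the arguments of each pair are coordinates on `ℤ × ℤ`, and
applying Cauchy–Schwarz.
-/

section CauchySchwarz

variable {α β γ δ ε G : Type*}

/-- The `ℓ²` norm of a `[0,∞]`-valued family, extending `l2Z` to arbitrary index types and to
infinite values. -/
noncomputable def l2Norm (u : α → ℝ≥0∞) : ℝ≥0∞ :=
  (∑' a, u a ^ 2) ^ (1/2 : ℝ)

lemma tsum_mul_le_l2Norm_mul_l2Norm (u v : α → ℝ≥0∞) :
    ∑' a, u a * v a ≤ l2Norm u * l2Norm v := by
  rw [ENNReal.tsum_eq_iSup_sum]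
  refine iSup_le fun s ↦ ?_
  have holder := ENNReal.inner_le_Lp_mul_Lq s u v Real.HolderConjugate.two_two
  simp only [ENNReal.rpow_two] at holder
  refine holder.trans ?_
  unfold l2Norm
  gcongr <;> exact ENNReal.sum_le_tsum s

lemma l2Norm_prod_mul (u : β → ℝ≥0∞) (v : γ → ℝ≥0∞) :
    l2Norm (fun p : β × γ ↦ u p.1 * v p.2) = l2Norm u * l2Norm v := by
  simp only [l2Norm, mul_pow]
  rw [ENNReal.tsum_prod', ← ENNReal.mul_rpow_of_nonneg _ _ (by norm_num)]
  simp only [ENNReal.tsum_mul_left, ENNReal.tsum_mul_right]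

lemma l2Norm_comp_equiv (e : α ≃ β) (u : β → ℝ≥0∞) : l2Norm (fun a ↦ u (e a)) = l2Norm u := by
  simp only [l2Norm, e.tsum_eq fun b ↦ u b ^ 2]

lemma tsum_mul_mul_mul_le_of_equiv (e₁ : α ≃ β × γ) (e₂ : α ≃ δ × ε)
    (u : β → ℝ≥0∞) (v : γ → ℝ≥0∞) (w : δ → ℝ≥0∞) (z : ε → ℝ≥0∞) :
    ∑' a, (u (e₁ a).1 * v (e₁ a).2) * (w (e₂ a).1 * z (e₂ a).2) ≤
      (l2Norm u * l2Norm v) * (l2Norm w * l2Norm z) := by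
  refine (tsum_mul_le_l2Norm_mul_l2Norm _ _).trans_eq ?_
  rw [l2Norm_comp_equiv e₁ fun p ↦ u p.1 * v p.2, l2Norm_comp_equiv e₂ fun p ↦ w p.1 * z p.2,
    l2Norm_prod_mul, l2Norm_prod_mul]

lemma tsum_add_add_mul_le [AddGroup G] (k f g h : G → ℝ≥0∞) :
    ∑' p : G × G, (k p.1 + k p.2 + k (p.1 + p.2)) * (f (p.1 - p.2) * g p.1 * h p.2) ≤
      3 * l2Norm k * (l2Norm f * l2Norm g * l2Norm h) := by
  let fstSub : G × G ≃ G × G := Equiv.prodShear (Equiv.refl G) Equiv.subLeft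
  let fstAdd : G × G ≃ G × G := Equiv.prodShear (Equiv.refl G) Equiv.addLeft
  let sndSub : G × G ≃ G × G :=
    (Equiv.prodComm G G).trans (Equiv.prodShear (Equiv.refl G) Equiv.subRight)
  have fst_le : ∑' p : G × G, (g p.1 * f (p.1 - p.2)) * (k p.1 * h p.2) ≤ _ :=
    tsum_mul_mul_mul_le_of_equiv fstSub (Equiv.refl _) g f k h
  have snd_le : ∑' p : G × G, (h p.2 * f (p.1 - p.2)) * (g p.1 * k p.2) ≤ _ :=
    tsum_mul_mul_mul_le_of_equiv sndSub (Equiv.refl _) h f g k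
  have add_le : ∑' p : G × G, (h p.2 * f (p.1 - p.2)) * (g p.1 * k (p.1 + p.2)) ≤ _ :=
    tsum_mul_mul_mul_le_of_equiv sndSub fstAdd h f g k
  calc
    ∑' p : G × G, (k p.1 + k p.2 + k (p.1 + p.2)) * (f (p.1 - p.2) * g p.1 * h p.2) =
        ∑' p : G × G, ((g p.1 * f (p.1 - p.2)) * (k p.1 * h p.2) +
          (h p.2 * f (p.1 - p.2)) * (g p.1 * k p.2) +
          (h p.2 * f (p.1 - p.2)) * (g p.1 * k (p.1 + p.2))) :=
      tsum_congr fun p ↦ by ring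
    _ ≤ (l2Norm g * l2Norm f) * (l2Norm k * l2Norm h) +
          (l2Norm h * l2Norm f) * (l2Norm g * l2Norm k) +
          (l2Norm h * l2Norm f) * (l2Norm g * l2Norm k) := by
      rw [ENNReal.tsum_add, ENNReal.tsum_add]
      exact add_le_add (add_le_add fst_le snd_le) add_le
    _ = 3 * l2Norm k * (l2Norm f * l2Norm g * l2Norm h) := by ring

end CauchySchwarz

section JapaneseBracket

lemma jbR_sq (x : ℝ) : jbR x ^ 2 = 1 + x ^ 2 := Real.sq_sqrt (by positivity)

lemma one_le_jbR (x : ℝ) : 1 ≤ jbR x := Real.one_le_sqrt.2 (by linarith [sq_nonneg x])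

lemma jbR_pos (x : ℝ) : 0 < jbR x := one_pos.trans_le (one_le_jbR x)

lemma abs_le_jbR (x : ℝ) : |x| ≤ jbR x := Real.abs_le_sqrt (by linarith)

lemma jbR_le_two_mul_abs {x : ℝ} (hx : 1 ≤ |x|) : jbR x ≤ 2 * |x| :=
  Real.sqrt_le_iff.2 ⟨by positivity, by nlinarith [sq_abs x]⟩

/-- The sequence `⟨n⟩⁻¹` on `ℤ`, as a `[0,∞]`-valued kernel. -/
noncomputable def invJbR (n : ℤ) : ℝ≥0∞ := ENNReal.ofReal (jbR n)⁻¹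

lemma summable_inv_jbR_sq : Summable fun n : ℤ ↦ ((jbR n)⁻¹) ^ 2 := by
  refine (Real.summable_one_div_int_pow.2 one_lt_two).of_norm_bounded_eventually ?_
  filter_upwards [Filter.eventually_cofinite_ne 0] with n hn
  rw [Real.norm_of_nonneg (by positivity), inv_pow, jbR_sq, ← one_div]
  gcongr
  linarith

lemma l2Norm_invJbR_ne_top : l2Norm invJbR ≠ ∞ := by
  have sq_eq (n : ℤ) : invJbR n ^ 2 = ENNReal.ofReal ((jbR n)⁻¹ ^ 2) :=
    (ENNReal.ofReal_pow (inv_nonneg.2 (jbR_pos n).le) 2).symm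
  simp only [l2Norm, sq_eq]
  exact ENNReal.rpow_ne_top_of_nonneg (by norm_num) summable_inv_jbR_sq.tsum_ofReal_ne_top

end JapaneseBracket

section Weight

/-- The weight `|x - y| / (⟨φ⟩ ⟨x⟩ ⟨y⟩)^{1/2}` of the trilinear estimate, for an arbitrary phase
value `φ` and real frequencies `x` and `y`. -/
noncomputable def phaseWeight (φ x y : ℝ) : ℝ :=
  |x - y| / (jbR φ ^ (1/2 : ℝ) * jbR x ^ (1/2 : ℝ) * jbR y ^ (1/2 : ℝ))

variable {L φ x y : ℝ}

lemma phaseWeight_sq (φ x y : ℝ) :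
    phaseWeight φ x y ^ 2 = |x - y| ^ 2 / (jbR φ * jbR x * jbR y) := by
  simp only [phaseWeight, ← Real.sqrt_eq_rpow, div_pow, mul_pow, Real.sq_sqrt (jbR_pos _).le]

lemma phaseWeight_le_of_sq_le {B : ℝ} (hB : 0 ≤ B)
    (h : |x - y| ^ 2 ≤ B ^ 2 * (jbR φ * jbR x * jbR y)) : phaseWeight φ x y ≤ B := by
  have hpos := mul_pos (mul_pos (jbR_pos φ) (jbR_pos x)) (jbR_pos y)
  refine le_of_sq_le_sq ?_ hB
  rwa [phaseWeight_sq, div_le_iff₀ hpos]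

lemma sq_abs_sub_le_of_abs_add_le (hs : |x + y| ≤ 2 * L) :
    |x - y| ^ 2 ≤ 4 * (1 + L ^ 2) * (jbR x * jbR y) := by
  have neg_mul_le : -(x * y) ≤ jbR x * jbR y := by
    refine (neg_le_abs _).trans ?_
    rw [abs_mul]
    exact mul_le_mul (abs_le_jbR x) (abs_le_jbR y) (abs_nonneg y) (jbR_pos x).le
  have one_le_mul : 1 ≤ jbR x * jbR y :=
    one_le_mul_of_one_le_of_one_le (one_le_jbR x) (one_le_jbR y)
  calc
    |x - y| ^ 2 = |x + y| ^ 2 + 4 * -(x * y) := by rw [sq_abs, sq_abs]; ring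
    _ ≤ (2 * L) ^ 2 * 1 + 4 * (jbR x * jbR y) := by rw [mul_one]; gcongr
    _ ≤ (2 * L) ^ 2 * (jbR x * jbR y) + 4 * (jbR x * jbR y) := by gcongr
    _ = 4 * (1 + L ^ 2) * (jbR x * jbR y) := by ring

lemma phaseWeight_le_of_abs_add_le (hs : |x + y| ≤ 2 * L) :
    phaseWeight φ x y ≤ 4 * (1 + L ^ 2) * (jbR (x + y))⁻¹ := by
  have hx := jbR_pos x
  have hy := jbR_pos y
  have hxy := jbR_pos (x + y)
  have jbR_add_sq_le : jbR (x + y) ^ 2 ≤ 4 * (1 + L ^ 2) := by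
    rw [jbR_sq, ← sq_abs]
    nlinarith [pow_le_pow_left₀ (abs_nonneg _) hs 2]
  refine phaseWeight_le_of_sq_le (by positivity) ?_
  calc
    |x - y| ^ 2 ≤ 4 * (1 + L ^ 2) * (jbR x * jbR y) := sq_abs_sub_le_of_abs_add_le hs
    _ = 4 * (1 + L ^ 2) * (jbR (x + y))⁻¹ ^ 2 * jbR (x + y) ^ 2 * (1 * jbR x * jbR y) := by
      field_simp
    _ ≤ 4 * (1 + L ^ 2) * (jbR (x + y))⁻¹ ^ 2 * (4 * (1 + L ^ 2)) * (jbR φ * jbR x * jbR y) := by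
      gcongr
      exact one_le_jbR φ
    _ = _ := by ring

lemma abs_sub_mul_jbR_add_le (hφ : |φ - (x ^ 2 - y ^ 2)| ≤ L * |x - y|)
    (hL : 2 * L ≤ |x + y|) (hs : 1 ≤ |x + y|) : |x - y| * jbR (x + y) ≤ 4 * jbR φ := by
  have factor : |x ^ 2 - y ^ 2| = |x - y| * |x + y| := by rw [← abs_mul]; ring_nf
  have triangle : |x ^ 2 - y ^ 2| - |φ| ≤ |φ - (x ^ 2 - y ^ 2)| := by
    rw [abs_sub_comm φ]
    exact abs_sub_abs_le_abs_sub _ _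
  have absorb : |x - y| * |x + y| ≤ 2 * |φ| := by
    nlinarith [mul_le_mul_of_nonneg_left hL (abs_nonneg (x - y))]
  calc
    |x - y| * jbR (x + y) ≤ |x - y| * (2 * |x + y|) := by gcongr; exact jbR_le_two_mul_abs hs
    _ ≤ 4 * |φ| := by linarith
    _ ≤ 4 * jbR φ := by gcongr; exact abs_le_jbR φ

lemma phaseWeight_le_of_le_abs_add (hφ : |φ - (x ^ 2 - y ^ 2)| ≤ L * |x - y|)
    (hL : 2 * L ≤ |x + y|) (hs : 1 ≤ |x + y|) :
    phaseWeight φ x y ≤ (jbR x)⁻¹ + (jbR y)⁻¹ + (jbR (x + y))⁻¹ := by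
  have hx := jbR_pos x
  have hy := jbR_pos y
  have hxy := jbR_pos (x + y)
  have hφ_pos := jbR_pos φ
  have sub_le : |x - y| ≤ jbR x + jbR y :=
    (abs_sub x y).trans (add_le_add (abs_le_jbR x) (abs_le_jbR y))
  refine phaseWeight_le_of_sq_le (by positivity) ?_
  calc
    |x - y| ^ 2 = |x - y| * (|x - y| * jbR (x + y)) * (jbR (x + y))⁻¹ := by field_simp
    _ ≤ (jbR x + jbR y) * (4 * jbR φ) * (jbR (x + y))⁻¹ := by
      gcongr ?_ * ?_ * _
      exact abs_sub_mul_jbR_add_le hφ hL hs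
    _ = 4 * ((jbR x)⁻¹ + (jbR y)⁻¹) * (jbR (x + y))⁻¹ * (jbR φ * jbR x * jbR y) := by
      field_simp
      ring
    _ ≤ _ := by
      gcongr
      exact four_mul_le_sq_add _ _

lemma phaseWeight_le (hL : 1 ≤ L) (hφ : |φ - (x ^ 2 - y ^ 2)| ≤ L * |x - y|) :
    phaseWeight φ x y ≤
      4 * (1 + L ^ 2) * ((jbR x)⁻¹ + (jbR y)⁻¹ + (jbR (x + y))⁻¹) := by
  have hx := inv_pos.2 (jbR_pos x)
  have hy := inv_pos.2 (jbR_pos y)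
  have hxy := inv_pos.2 (jbR_pos (x + y))
  rcases le_total |x + y| (2 * L) with hs | hs
  · refine (phaseWeight_le_of_abs_add_le hs).trans ?_
    gcongr
    linarith
  · refine (phaseWeight_le_of_le_abs_add hφ hs (by linarith)).trans ?_
    exact le_mul_of_one_le_left (by positivity) (by nlinarith)

lemma abs_PhiZak_sub_le (σ : ℝ) {m n : ℤ} (hmn : m ≠ n) :
    |PhiZak σ m n - ((m : ℝ) ^ 2 - (n : ℝ) ^ 2)| ≤ 2 * |σ| * |(m : ℝ) - n| := by
  have one_le : (1 : ℝ) ≤ |(m : ℝ) - n| := mod_cast Int.one_le_abs (sub_ne_zero.2 hmn)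
  have error : PhiZak σ m n - ((m : ℝ) ^ 2 - (n : ℝ) ^ 2) = σ * jbR ((m : ℝ) - n) := by
    simp [PhiZak]
  rw [error, abs_mul, abs_of_pos (jbR_pos _)]
  calc
    |σ| * jbR ((m : ℝ) - n) ≤ |σ| * (2 * |(m : ℝ) - n|) := by
      gcongr
      exact jbR_le_two_mul_abs one_le
    _ = 2 * |σ| * |(m : ℝ) - n| := by ring

lemma ofReal_phaseWeight_PhiZak_le {L σ : ℝ} (hL : 1 ≤ L) (hσ : 2 * |σ| ≤ L) (m n : ℤ) :
    ENNReal.ofReal (phaseWeight (PhiZak σ m n) m n) ≤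
      ENNReal.ofReal (4 * (1 + L ^ 2)) * (invJbR m + invJbR n + invJbR (m + n)) := by
  rcases eq_or_ne m n with rfl | hmn
  · simp [phaseWeight]
  have hm := inv_pos.2 (jbR_pos m)
  have hn := inv_pos.2 (jbR_pos n)
  have hmn' := inv_pos.2 (jbR_pos ((m + n : ℤ) : ℝ))
  have phase_le : |PhiZak σ m n - ((m : ℝ) ^ 2 - (n : ℝ) ^ 2)| ≤ L * |(m : ℝ) - n| :=
    (abs_PhiZak_sub_le σ hmn).trans (by gcongr)
  simp only [invJbR]
  rw [← ENNReal.ofReal_add hm.le hn.le, ← ENNReal.ofReal_add (by positivity) hmn'.le,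
    ← ENNReal.ofReal_mul (by positivity), Int.cast_add]
  exact ENNReal.ofReal_le_ofReal (phaseWeight_le hL phase_le)

end Weight

theorem Zakharov_W2_general (M : ℝ) :
    ∃ C : ℝ, 0 < C ∧
      ∀ σ : ℝ, |σ| ≤ M →
        ∀ f g h : ℤ → ℝ≥0,
          (∑' p : ℤ × ℤ,
              ENNReal.ofReal ((|p.1 - p.2| : ℝ) /
                  (jbR (PhiZak σ p.1 p.2) ^ (1/2 : ℝ) * jbR (p.1 : ℝ) ^ (1/2 : ℝ) *
                    jbR (p.2 : ℝ) ^ (1/2 : ℝ))) *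
                (f (p.1 - p.2) : ℝ≥0∞) * (g p.1 : ℝ≥0∞) * (h p.2 : ℝ≥0∞))
            ≤ ENNReal.ofReal C * (l2Z f * l2Z g * l2Z h) := by
  set L : ℝ := max 1 (2 * M)
  set A : ℝ≥0∞ := ENNReal.ofReal (4 * (1 + L ^ 2))
  have const_lt_top : A * (3 * l2Norm invJbR) < ∞ := by
    finiteness [l2Norm_invJbR_ne_top]
  obtain ⟨C, hC, -⟩ := ENNReal.lt_iff_exists_nnreal_btwn.1 const_lt_top
  refine ⟨C, ENNReal.coe_pos.1 (zero_le.trans_lt hC), fun σ hσ f g h ↦ ?_⟩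
  have hL : 2 * |σ| ≤ L := le_max_of_le_right (by linarith)
  calc
    _ ≤ ∑' p : ℤ × ℤ, A * ((invJbR p.1 + invJbR p.2 + invJbR (p.1 + p.2)) *
          (f (p.1 - p.2) * g p.1 * h p.2)) := by
      refine ENNReal.tsum_le_tsum fun p ↦ ?_
      simp only [← mul_assoc]
      gcongr
      exact ofReal_phaseWeight_PhiZak_le (le_max_left _ _) hL p.1 p.2
    _ ≤ A * (3 * l2Norm invJbR * (l2Z f * l2Z g * l2Z h)) := by
      rw [ENNReal.tsum_mul_left]
      gcongr
      exact tsum_add_add_mul_le invJbR (f ·) (g ·) (h ·)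
    _ ≤ ENNReal.ofReal C * (l2Z f * l2Z g * l2Z h) := by
      rw [← mul_assoc, ENNReal.ofReal_coe_nnreal]
      gcongr

/-- The Zakharov trilinear weight estimate with weight
`|n₀| / (⟨Φ_σ⟩^{1/2} ⟨n₁⟩^{1/2} ⟨n₂⟩^{1/2})`, `n₀ = n₁ - n₂`. -/
theorem Zakharov_W2 :
    ∃ C : ℝ, 0 < C ∧
      ∀ σ : ℝ, (σ = 1 ∨ σ = -1) →
        ∀ f g h : ℤ → ℝ≥0,
          Summable (fun n => f n ^ 2) → Summable (fun n => g n ^ 2) →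
          Summable (fun n => h n ^ 2) →
          (∑' p : ℤ × ℤ,
              ENNReal.ofReal ((|p.1 - p.2| : ℝ) /
                  (jbR (PhiZak σ p.1 p.2) ^ (1/2 : ℝ) * jbR (p.1 : ℝ) ^ (1/2 : ℝ) *
                    jbR (p.2 : ℝ) ^ (1/2 : ℝ))) *
                (f (p.1 - p.2) : ℝ≥0∞) * (g p.1 : ℝ≥0∞) * (h p.2 : ℝ≥0∞))
            ≤ ENNReal.ofReal C * (l2Z f * l2Z g * l2Z h) := by
  obtain ⟨C, hC, hbound⟩ := Zakharov_W2_general 1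
  exact ⟨C, hC, fun σ hσ f g h _ _ _ ↦ hbound σ (by rcases hσ with rfl | rfl <;> norm_num) f g h⟩
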